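/- arXiv:2010.01129 — 2 statements merged into one kernel-verified Lean document; each statement's English description precedes it below -/
import Mathlib

section
/- Let g(z) = −z³ − (3/2)z (that is, g = g_{a,b} with (a,b) = (1/√2, 0)). Define A₊ = {z ∈ ℂ : g^{∘2n}(z) → i/√2 as n → ∞} and A₋ = {z ∈ ℂ : g^{∘2n}(z) → −i/√2 as n → ∞}. Then the point 0 lies in the closure of A₊ and also in the closure of A₋, although 0 belongs to neither set (0 being a repelling fixed point of g). -/
/-- The cubic `g(z) = -z^3 - (3/2) z`, i.e. `g_{a,b}` with `(a,b) = (1/√2, 0)`. -/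
noncomputable def gBitrans : ℂ → ℂ := fun z => -z ^ 3 - (3 / 2) * z

/-- The set of points whose even iterates under `gBitrans` converge to `i/√2`. -/
def Aplus : Set ℂ :=
  {z | Filter.Tendsto (fun n => gBitrans^[2 * n] z) Filter.atTop
    (nhds (Complex.I / (Real.sqrt 2 : ℂ)))}

/-- The set of points whose even iterates under `gBitrans` converge to `-i/√2`. -/
def Aminus : Set ℂ :=
  {z | Filter.Tendsto (fun n => gBitrans^[2 * n] z) Filter.atTop
    (nhds (-(Complex.I / (Real.sqrt 2 : ℂ))))}

/-! On the imaginary axis `g (iy) = -i k(y)` with `k(y) = 3y/2 - y³`. On `(0, 1/√2)` the real map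
`k` moves points up without passing its fixed point `1/√2`, so every `iy` with `0 < y ≤ 1/√2` lies
in `A₊`, and these points accumulate at `0`. Since `g` is odd, `A₋ = -A₊`. Finally `0` is fixed by
`g`, so its orbit does not tend to `±i/√2`. -/

open Filter Function Set Topology
open scoped Pointwise

section Iteration

variable {α : Type*}

theorem tendsto_iterate_of_mem_Ioc [ConditionallyCompleteLinearOrder α] [TopologicalSpace α]
    [OrderTopology α] {f : α → α} {a c x : α} (hf : ContinuousOn f (Ioo a c)) (hc : IsFixedPt f c)
    (hmap : ∀ y ∈ Ioo a c, f y ∈ Ioc y c) (hx : x ∈ Ioc a c) :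
    Tendsto (fun n ↦ f^[n] x) atTop (𝓝 c) := by
  have map_mem : ∀ y ∈ Ioc a c, f y ∈ Icc y c := by
    rintro y ⟨hay, hyc⟩
    obtain rfl | hyc := hyc.eq_or_lt
    · simp [hc.eq]
    · exact Ioc_subset_Icc_self (hmap y ⟨hay, hyc⟩)
  have iterate_mem (n : ℕ) : f^[n] x ∈ Ioc a c :=
    have mapsTo : MapsTo f (Ioc a c) (Ioc a c) := fun y hy ↦
      ⟨hy.1.trans_le (map_mem y hy).1, (map_mem y hy).2⟩
    mapsTo.iterate n hx
  have monotone : Monotone fun n ↦ f^[n] x := monotone_nat_of_le_succ fun n ↦ by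
    simpa only [iterate_succ_apply'] using (map_mem _ (iterate_mem n)).1
  have bounded : BddAbove (range fun n ↦ f^[n] x) :=
    ⟨c, forall_mem_range.2 fun n ↦ (iterate_mem n).2⟩
  have tendsto_iSup := tendsto_atTop_ciSup monotone bounded
  set L := ⨆ n, f^[n] x
  have lt_L : a < L := hx.1.trans_le (le_ciSup bounded 0)
  have L_eq : L = c := by
    by_contra hne
    have L_mem : L ∈ Ioo a c := ⟨lt_L, (ciSup_le fun n ↦ (iterate_mem n).2).lt_of_ne hne⟩
    have L_fixed : IsFixedPt f L :=
      isFixedPt_of_tendsto_iterate tendsto_iSup (hf.continuousAt (isOpen_Ioo.mem_nhds L_mem))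
    exact (hmap L L_mem).1.ne' L_fixed
  rwa [L_eq] at tendsto_iSup

theorem iterate_two_mul_neg [InvolutiveNeg α] {f : α → α} (hf : f.Odd) (n : ℕ) :
    (-f)^[2 * n] = f^[2 * n] := by
  have neg_comp_neg : (-f)^[2] = f^[2] := funext fun x ↦ by simp [hf (f x)]
  rw [iterate_mul, neg_comp_neg, iterate_mul]

theorem odd_iterate [Neg α] {f : α → α} (hf : f.Odd) (n : ℕ) : (f^[n]).Odd :=
  (show Function.Commute f Neg.neg from hf).iterate_left n

end Iteration

/-- The real map `k` by which `-gBitrans` acts on the imaginary axis, in the coordinate `y ↦ iy`. -/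
noncomputable def imagAxisMap (y : ℝ) : ℝ := 3 / 2 * y - y ^ 3

-- The double zero at `c` is the vanishing of the derivative of `k` at its fixed point.
theorem sub_imagAxisMap {c : ℝ} (hc : c ^ 2 = 1 / 2) (y : ℝ) :
    c - imagAxisMap y = (c - y) ^ 2 * (y + 2 * c) := by
  unfold imagAxisMap
  linear_combination (3 * y - 2 * c) * hc

theorem isFixedPt_imagAxisMap {c : ℝ} (hc : c ^ 2 = 1 / 2) : IsFixedPt imagAxisMap c := by
  simpa [sub_eq_zero, eq_comm, IsFixedPt] using sub_imagAxisMap hc c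

theorem imagAxisMap_mem_Ioc {c y : ℝ} (hc : c ^ 2 = 1 / 2) (hy : y ∈ Ioo 0 c) :
    imagAxisMap y ∈ Ioc y c := by
  obtain ⟨hy₀, hyc⟩ := hy
  have sq_lt : y ^ 2 < 1 / 2 := hc ▸ pow_lt_pow_left₀ hyc hy₀.le two_ne_zero
  constructor
  · have : 0 < y * (1 / 2 - y ^ 2) := mul_pos hy₀ (sub_pos.2 sq_lt)
    unfold imagAxisMap
    linarith
  · have hc₀ : 0 < c := hy₀.trans hyc
    rw [← sub_nonneg, sub_imagAxisMap hc]
    positivity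

theorem tendsto_iterate_imagAxisMap {c y : ℝ} (hc : c ^ 2 = 1 / 2) (hy : y ∈ Ioc 0 c) :
    Tendsto (fun n ↦ imagAxisMap^[n] y) atTop (𝓝 c) :=
  tendsto_iterate_of_mem_Ioc (by unfold imagAxisMap; fun_prop) (isFixedPt_imagAxisMap hc)
    (fun _ ↦ imagAxisMap_mem_Ioc hc) hy

theorem odd_gBitrans : gBitrans.Odd := fun z ↦ by
  unfold gBitrans
  ring

theorem semiconj_imagAxisMap :
    Semiconj (fun y : ℝ ↦ (y : ℂ) * Complex.I) imagAxisMap (-gBitrans) := fun y ↦ by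
  simp only [imagAxisMap, gBitrans, Pi.neg_apply]
  push_cast
  linear_combination -(y : ℂ) ^ 3 * Complex.I * Complex.I_sq

theorem gBitrans_iterate_two_mul_mul_I (n : ℕ) (y : ℝ) :
    gBitrans^[2 * n] (y * Complex.I) = (imagAxisMap^[2 * n] y : ℝ) * Complex.I := by
  rw [← iterate_two_mul_neg odd_gBitrans]
  exact (semiconj_imagAxisMap.iterate_right (2 * n) y).symm

theorem mul_I_mem_Aplus {y : ℝ} (hy : y ∈ Ioc 0 (√2)⁻¹) : (y : ℂ) * Complex.I ∈ Aplus := by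
  have tendsto_even : Tendsto (fun n ↦ imagAxisMap^[2 * n] y) atTop (𝓝 (√2)⁻¹) :=
    (tendsto_iterate_imagAxisMap (by norm_num) hy).comp
      (tendsto_id.const_mul_atTop' two_pos)
  have limit_eq : Complex.I / (√2 : ℂ) = ((√2)⁻¹ : ℝ) * Complex.I := by
    rw [Complex.ofReal_inv, div_eq_inv_mul]
  simp only [Aplus, mem_ofPred_eq, gBitrans_iterate_two_mul_mul_I, limit_eq]
  exact tendsto_even.ofReal.mul_const Complex.I

theorem zero_mem_closure_Aplus : (0 : ℂ) ∈ closure Aplus := by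
  have zero_mem : (0 : ℝ) ∈ closure (Ioc 0 (√2)⁻¹) := by
    rw [closure_Ioc (by positivity)]
    exact left_mem_Icc.2 (by positivity)
  simpa using map_mem_closure (f := fun y : ℝ ↦ (y : ℂ) * Complex.I) (by fun_prop) zero_mem
    fun _ ↦ mul_I_mem_Aplus

theorem Aminus_eq_neg_Aplus : Aminus = -Aplus := by
  ext z
  simp only [Aminus, Aplus, Set.mem_neg, mem_ofPred_eq, (odd_iterate odd_gBitrans _).eq]
  rw [← tendsto_neg_iff, neg_neg]

theorem zero_notMem_Aplus : (0 : ℂ) ∉ Aplus := by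
  have zero_fixed : IsFixedPt gBitrans 0 := odd_gBitrans.map_zero
  have limit_ne_zero : Complex.I / (√2 : ℂ) ≠ 0 := by simp
  simpa only [Aplus, mem_ofPred_eq, (zero_fixed.iterate _).eq, tendsto_const_nhds_iff]
    using limit_ne_zero.symm

/-- The point `0` lies in the closure of each of the two superattracting basins
`A₊` and `A₋` of `g(z) = -z^3 - (3/2)z`, but belongs to neither of them. -/
theorem zero_in_closures_not_in_basins :
    (0 : ℂ) ∈ closure Aplus ∧ (0 : ℂ) ∈ closure Aminus ∧
      (0 : ℂ) ∉ Aplus ∧ (0 : ℂ) ∉ Aminus := by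
  have closure_Aminus : closure Aminus = -closure Aplus := by
    rw [Aminus_eq_neg_Aplus, neg_closure]
  refine ⟨zero_mem_closure_Aplus, ?_, zero_notMem_Aplus, ?_⟩
  · simpa [closure_Aminus] using zero_mem_closure_Aplus
  · simpa [Aminus_eq_neg_Aplus] using zero_notMem_Aplus
end

section
/- Let d ≥ 2 be an integer, c ∈ ℂ, and ω = exp(2πi/(d−1)). The polynomial p_c(z) = z^d + c commutes with some invertible anti-holomorphic affine map of the plane (a map of the form τ(z) = μz̄ + ν with μ ≠ 0) if and only if c̄ = ω^j c for some integer j; moreover any such commuting map τ necessarily has ν = 0 and μ^{d−1} = 1, and is automatically an anti-holomorphic involution (τ∘τ = id). -/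
/-!
Conjugating `p_c` by `z ↦ z̄` gives `p_c̄`, so `z ↦ μ z̄ + ν` commutes with `p_c` exactly when the
affine map `A w = μ w + ν` satisfies `A ∘ p_c̄ = p_c ∘ A`. Differentiating this identity shows that
`A` fixes the common critical point `0`, so `ν = 0`. Comparing coefficients then leaves
`μ ^ (d - 1) = 1` and `μ c̄ = c`. Since `μ` is a root of unity, `μ μ̄ = 1`, which makes the map an
involution.
-/

open Function ComplexConjugate

/-- The unicritical polynomial map `p_c(z) = z ^ d + c`. -/
def unicritical {R : Type*} [Semiring R] (d : ℕ) (c z : R) : R :=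
  z ^ d + c

/-- The anti-affine map `τ(z) = μ z̄ + ν`; conjugation is the star operation of `R`. -/
def antiAffine {R : Type*} [CommSemiring R] [StarRing R] (μ ν z : R) : R :=
  μ * conj z + ν

section Semiconj

variable {R : Type*} [CommRing R] [IsDomain R] [Infinite R] {d : ℕ} {a b μ ν : R}

theorem affine_pow_pred_eq_of_semiconj (hdR : (d : R) ≠ 0) (hμ : μ ≠ 0)
    (h : Semiconj (fun w ↦ μ * w + ν) (unicritical d a) (unicritical d b)) (w : R) :
    (μ * w + ν) ^ (d - 1) = w ^ (d - 1) := by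
  open Polynomial in
  have hpoly : C μ * (X ^ d + C a) + C ν = (C μ * X + C ν) ^ d + C b :=
    Polynomial.funext fun w ↦ by simpa [unicritical] using h w
  have hderiv : μ * (d * w ^ (d - 1)) = d * (μ * w + ν) ^ (d - 1) * μ := by
    simpa [Polynomial.derivative_pow] using
      congrArg (fun p ↦ (Polynomial.derivative p).eval w) hpoly
  refine mul_left_cancel₀ (mul_ne_zero hμ hdR) ?_
  linear_combination -hderiv

theorem semiconj_affine_unicritical_iff (hd : 2 ≤ d) (hdR : (d : R) ≠ 0) (hμ : μ ≠ 0) :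
    Semiconj (fun w ↦ μ * w + ν) (unicritical d a) (unicritical d b) ↔
      ν = 0 ∧ μ ^ (d - 1) = 1 ∧ μ * a = b := by
  have hd₀ : d ≠ 0 := by lia
  have hd₁ : d - 1 ≠ 0 := by lia
  constructor
  · intro h
    have hcrit := affine_pow_pred_eq_of_semiconj hdR hμ h
    obtain rfl : ν = 0 := by simpa [hd₁] using hcrit 0
    exact ⟨rfl, by simpa using hcrit 1, by simpa [unicritical, hd₀] using h 0⟩
  · rintro ⟨rfl, hroot, rfl⟩ w
    have hpow : μ ^ d = μ := by rw [← mul_pow_sub_one hd₀, hroot, mul_one]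
    simp only [unicritical, add_zero, mul_pow, hpow, mul_add]

end Semiconj

section AntiAffine

theorem antiAffine_involutive_iff {R : Type*} [CommSemiring R] [StarRing R] [IsCancelAdd R]
    {μ ν : R} : Involutive (antiAffine μ ν) ↔ μ * conj μ = 1 ∧ μ * conj ν + ν = 0 := by
  have hcomp (z : R) : antiAffine μ ν (antiAffine μ ν z) = μ * conj μ * z + (μ * conj ν + ν) := by
    simp only [antiAffine, map_add, map_mul, starRingEnd_self_apply]
    ring
  simp only [Involutive, hcomp]
  refine ⟨fun h ↦ ?_, fun ⟨hμ, hν⟩ z ↦ by rw [hμ, hν, one_mul, add_zero]⟩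
  have hν : μ * conj ν + ν = 0 := by simpa using h 0
  exact ⟨by simpa [hν] using h 1, hν⟩

theorem commute_antiAffine_unicritical_iff_semiconj {R : Type*} [CommSemiring R] [StarRing R]
    {d : ℕ} {c μ ν : R} :
    Function.Commute (antiAffine μ ν) (unicritical d c) ↔
      Semiconj (fun w ↦ μ * w + ν) (unicritical d (conj c)) (unicritical d c) := by
  have hconj : Semiconj conj (unicritical d c) (unicritical d (conj c)) := fun z ↦ by
    simp only [unicritical, map_add, map_pow]
  refine ⟨fun h w ↦ ?_, fun h ↦ h.comp_left hconj⟩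
  simpa [antiAffine, unicritical] using h (conj w)

variable {R : Type*} [CommRing R] [IsDomain R] [Infinite R] [StarRing R] {d : ℕ} {c μ ν : R}

theorem commute_antiAffine_unicritical_iff (hd : 2 ≤ d) (hdR : (d : R) ≠ 0) (hμ : μ ≠ 0) :
    Function.Commute (antiAffine μ ν) (unicritical d c) ↔
      ν = 0 ∧ μ ^ (d - 1) = 1 ∧ μ * conj c = c := by
  rw [commute_antiAffine_unicritical_iff_semiconj, semiconj_affine_unicritical_iff hd hdR hμ]

theorem exists_commute_antiAffine_unicritical_iff (hd : 2 ≤ d) (hdR : (d : R) ≠ 0) :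
    (∃ μ ν : R, μ ≠ 0 ∧ Function.Commute (antiAffine μ ν) (unicritical d c)) ↔
      ∃ μ : R, μ ^ (d - 1) = 1 ∧ μ * conj c = c := by
  constructor
  · rintro ⟨μ, ν, hμ, h⟩
    exact ⟨μ, ((commute_antiAffine_unicritical_iff hd hdR hμ).1 h).2⟩
  · rintro ⟨μ, hroot, hc⟩
    have hμ : μ ≠ 0 := (IsUnit.of_pow_eq_one hroot (by lia)).ne_zero
    exact ⟨μ, 0, hμ, (commute_antiAffine_unicritical_iff hd hdR hμ).2 ⟨rfl, hroot, hc⟩⟩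

end AntiAffine

section RootsOfUnity

theorem exists_pow_eq_one_and_mul_eq_iff {K : Type*} [Field K] {ω : K} {n : ℕ} (hn : n ≠ 0)
    (hω : IsPrimitiveRoot ω n) {a b : K} :
    (∃ μ : K, μ ^ n = 1 ∧ μ * a = b) ↔ ∃ j : ℤ, a = ω ^ j * b := by
  have : NeZero n := ⟨hn⟩
  have hω₀ : ω ≠ 0 := hω.ne_zero hn
  constructor
  · rintro ⟨μ, hμ, rfl⟩
    obtain ⟨k, -, rfl⟩ := hω.eq_pow_of_pow_eq_one hμ
    exact ⟨-k, by simp [hω₀]⟩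
  · rintro ⟨j, rfl⟩
    refine ⟨ω ^ (-j), ?_, by rw [zpow_neg, inv_mul_cancel_left₀ (zpow_ne_zero j hω₀)]⟩
    rw [← zpow_natCast, zpow_comm, zpow_natCast, hω.pow_eq_one, one_zpow]

theorem isPrimitiveRoot_exp_pred {d : ℕ} (hd : 2 ≤ d) :
    IsPrimitiveRoot (Complex.exp (2 * Real.pi * Complex.I / ((d : ℂ) - 1))) (d - 1) := by
  simpa [Nat.cast_pred (by lia : 0 < d)] using Complex.isPrimitiveRoot_exp (d - 1) (by lia)

theorem mul_conj_eq_one_of_pow_eq_one {K : Type*} [RCLike K] {μ : K} {n : ℕ} (hn : n ≠ 0)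
    (hμ : μ ^ n = 1) : μ * conj μ = 1 := by
  have hnorm : ‖μ‖ = 1 := (isOfFinOrder_iff_pow_eq_one.2 ⟨n, by lia, hμ⟩).norm_eq_one
  simp [RCLike.mul_conj, hnorm]

end RootsOfUnity

/-- With `ω = exp(2πi/(d-1))`, the polynomial `p_c(z) = z^d + c` (`d ≥ 2`) commutes
with some invertible anti-holomorphic affine map `τ(z) = μ z̄ + ν` (`μ ≠ 0`) if and
only if `c̄ = ω^j c` for some integer `j`; moreover any such commuting `τ` has
`ν = 0`, `μ^(d-1) = 1`, and is an anti-holomorphic involution (`τ ∘ τ = id`). -/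
theorem unicritical_commutes_with_antiholomorphic (d : ℕ) (hd : 2 ≤ d) (c : ℂ) :
    ((∃ μ ν : ℂ, μ ≠ 0 ∧
        ∀ z : ℂ, μ * starRingEnd ℂ (z ^ d + c) + ν = (μ * starRingEnd ℂ z + ν) ^ d + c) ↔
      ∃ j : ℤ, starRingEnd ℂ c =
        Complex.exp (2 * Real.pi * Complex.I / ((d : ℂ) - 1)) ^ j * c) ∧
    ∀ μ ν : ℂ, μ ≠ 0 →
      (∀ z : ℂ, μ * starRingEnd ℂ (z ^ d + c) + ν = (μ * starRingEnd ℂ z + ν) ^ d + c) →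
      ν = 0 ∧ μ ^ (d - 1) = 1 ∧
        ∀ z : ℂ, μ * starRingEnd ℂ (μ * starRingEnd ℂ z + ν) + ν = z := by
  have hd₁ : d - 1 ≠ 0 := by lia
  have hdℂ : (d : ℂ) ≠ 0 := Nat.cast_ne_zero.2 (by lia)
  constructor
  · exact (exists_commute_antiAffine_unicritical_iff hd hdℂ).trans
      (exists_pow_eq_one_and_mul_eq_iff hd₁ (isPrimitiveRoot_exp_pred hd))
  · intro μ ν hμ hcomm
    obtain ⟨rfl, hroot, -⟩ := (commute_antiAffine_unicritical_iff hd hdℂ hμ).1 hcomm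
    have hunit : μ * conj μ = 1 := mul_conj_eq_one_of_pow_eq_one hd₁ hroot
    exact ⟨rfl, hroot, antiAffine_involutive_iff.2 ⟨hunit, by simp⟩⟩
end
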